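/- Bounded witnesses for strongly uniform Until strategies: Let M be an RB-CGS# with indistinguishability relations ∼_a respecting available actions, A a nonempty coalition, b a resource bound, and k = min_{a∈A} b_{a,1}. If F_A and F'_A are uniform strategies for A that agree on every nonempty state sequence of length at most k, then out(s', F_A, b) = out(s', F'_A, b) for every state s'; consequently, F_A witnesses M, s ⊨_iR ⟨⟨A^b⟩⟩ φ U ψ if and only if F'_A does. Hence the existence of a strongly uniform witnessing strategy depends only on the (finitely many, when Act is finite) restrictions of uniform strategies to sequences of length at most k. -/

import Mathlib

/-!
Every available action consumes at least one unit of the diminishing resource and produces none of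
it, so after `i` steps agent `a` holds at most `b_{a,1} - i` units (`eAvail_res1_le`). A
`b`-consistent computation can therefore make its `i`-th step (counted from `0`) only if
`i + 1 ≤ b_{a,1}` for every `a ∈ A`, that is, only if the history `λ[1,i+1]` on which the strategy is
consulted has length at most `k` (`take_le_sInf`). Hence two strategies that agree on histories of
length at most `k` have the same `b`-consistent computations (`consistent_and_bConsistent_imp`), and
`b`-maximality depends only on this set.
-/

/-- A resource-bounded concurrent game structure with a diminishing resource (RB-CGS#). -/
structure RBCGS (Agt S Act Res : Type) where
  /-- available actions for each agent in each state -/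
  d : S → Agt → Set Act
  d_ne : ∀ s a, (d s a).Nonempty
  /-- cost function (negative = consumption, positive = production) -/
  cost : S → Act → Res → ℤ
  /-- the distinguished diminishing resource (the "first" resource) -/
  res1 : Res
  /-- every available action consumes at least one unit of the diminishing resource -/
  cost_first : ∀ s (a : Agt) (α : Act), α ∈ d s a → cost s α res1 ≤ -1
  /-- partial transition function on joint actions -/
  tr : S → (Agt → Act) → Option S

namespace RBCGS

variable {Agt S Act Res : Type}

/-- consumption of resource ρ by action α at state s : `|min(0, c(s,α))|`. -/
def consR (M : RBCGS Agt S Act Res) (s : S) (α : Act) (ρ : Res) : ℕ :=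
  (min 0 (M.cost s α ρ)).natAbs

/-- production of resource ρ by action α at state s : `max(0, c(s,α))`. -/
def prodR (M : RBCGS Agt S Act Res) (s : S) (α : Act) (ρ : Res) : ℕ :=
  (max 0 (M.cost s α ρ)).toNat

/-- σ is a (projection of a) joint action for coalition A at state s. -/
def JointAt (M : RBCGS Agt S Act Res) (A : Set Agt) (s : S) (σ : Agt → Act) : Prop :=
  ∀ a ∈ A, σ a ∈ M.d s a

/-- outcomes of a joint action of coalition A at state s. -/
def outA (M : RBCGS Agt S Act Res) (A : Set Agt) (s : S) (σA : Agt → Act) : Set S :=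
  { s' | ∃ σ : Agt → Act, (∀ a, σ a ∈ M.d s a) ∧ (∀ a ∈ A, σ a = σA a) ∧
    M.tr s σ = some s' }

variable [Inhabited S]

/-- F is a strategy for coalition A : on every nonempty history it prescribes a joint
action available to A at the last state of the history. -/
def Strategy (M : RBCGS Agt S Act Res) (A : Set Agt) (F : List S → Agt → Act) : Prop :=
  ∀ l : List S, l ≠ [] → M.JointAt A (l.getD (l.length - 1) default) (F l)

/-- l is a (finite, nonempty) computation starting at s consistent with strategy F
(the computation `λ[1..k]` is represented 0-based as `l[0..k-1]`). -/
def ConsistentFrom (M : RBCGS Agt S Act Res) (A : Set Agt) (F : List S → Agt → Act)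
    (s : S) (l : List S) : Prop :=
  l ≠ [] ∧ l.getD 0 default = s ∧
    ∀ i, i + 1 < l.length →
      l.getD (i + 1) default ∈ M.outA A (l.getD i default) (F (l.take (i + 1)))

/-- `eAvail M F b l i a ρ` is the amount `e_a(λ[i+1])` of resource ρ available to a
after i steps of l under strategy F with initial bound b. -/
def eAvail (M : RBCGS Agt S Act Res) (F : List S → Agt → Act)
    (b : Agt → Res → ℕ) (l : List S) : ℕ → Agt → Res → ℤ
  | 0 => fun a ρ => (b a ρ : ℤ)
  | i + 1 => fun a ρ =>
      eAvail M F b l i a ρ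
        - (M.consR (l.getD i default) (F (l.take (i + 1)) a) ρ : ℤ)
        + (M.prodR (l.getD i default) (F (l.take (i + 1)) a) ρ : ℤ)

/-- l is b-consistent with strategy F for coalition A. -/
def BConsistent (M : RBCGS Agt S Act Res) (A : Set Agt) (F : List S → Agt → Act)
    (b : Agt → Res → ℕ) (l : List S) : Prop :=
  ∀ a ∈ A, ∀ i, i + 1 < l.length → ∀ ρ,
    (M.consR (l.getD i default) (F (l.take (i + 1)) a) ρ : ℤ) ≤ M.eAvail F b l i a ρ

/-- l is a b-maximal computation from s consistent with F. -/
def BMaximal (M : RBCGS Agt S Act Res) (A : Set Agt) (F : List S → Agt → Act)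
    (b : Agt → Res → ℕ) (s : S) (l : List S) : Prop :=
  M.ConsistentFrom A F s l ∧ M.BConsistent A F b l ∧
    ¬ ∃ l' : List S, l <+: l' ∧ l.length < l'.length ∧
        M.ConsistentFrom A F s l' ∧ M.BConsistent A F b l'

/-- `out(s, F_A, b)` : the set of b-maximal computations from s consistent with F. -/
def outSet (M : RBCGS Agt S Act Res) (A : Set Agt) (F : List S → Agt → Act)
    (b : Agt → Res → ℕ) (s : S) : Set (List S) :=
  { l | M.BMaximal A F b s l }

end RBCGS

/-- Formulas of RB±ATL#. -/
inductive RBForm (Agt Res P : Type) : Type 1 where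
  | prop : P → RBForm Agt Res P
  | neg : RBForm Agt Res P → RBForm Agt Res P
  | or : RBForm Agt Res P → RBForm Agt Res P → RBForm Agt Res P
  | nxt : Set Agt → (Agt → Res → ℕ) → RBForm Agt Res P → RBForm Agt Res P
  | untl : Set Agt → (Agt → Res → ℕ) → RBForm Agt Res P → RBForm Agt Res P → RBForm Agt Res P
  | rls : Set Agt → (Agt → Res → ℕ) → RBForm Agt Res P → RBForm Agt Res P → RBForm Agt Res P

namespace RBCGS

variable {Agt S Act Res P : Type} [Inhabited S]

/-- Truth of an RB±ATL# formula at a state of an RB-CGS#, given a valuation V. -/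
def Sat (M : RBCGS Agt S Act Res) (V : P → S → Prop) :
    RBForm Agt Res P → S → Prop
  | .prop p, s => V p s
  | .neg φ, s => ¬ Sat M V φ s
  | .or φ ψ, s => Sat M V φ s ∨ Sat M V ψ s
  | .nxt A b φ, s => ∃ F, M.Strategy A F ∧
      ∀ l ∈ M.outSet A F b s, 2 ≤ l.length ∧ Sat M V φ (l.getD 1 default)
  | .untl A b φ ψ, s => ∃ F, M.Strategy A F ∧
      ∀ l ∈ M.outSet A F b s, ∃ i < l.length,
        Sat M V ψ (l.getD i default) ∧ ∀ j < i, Sat M V φ (l.getD j default)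
  | .rls A b φ ψ, s => ∃ F, M.Strategy A F ∧
      ∀ l ∈ M.outSet A F b s,
        (∃ i < l.length, Sat M V φ (l.getD i default) ∧
          ∀ j ≤ i, Sat M V ψ (l.getD j default)) ∨
        (∀ j < l.length, Sat M V ψ (l.getD j default))

end RBCGS

/-- All coalitions occurring in the formula are nonempty. -/
def RBForm.goodCoal {Agt Res P : Type} : RBForm Agt Res P → Prop
  | .prop _ => True
  | .neg φ => φ.goodCoal
  | .or φ ψ => φ.goodCoal ∧ ψ.goodCoal
  | .nxt A _ φ => A.Nonempty ∧ φ.goodCoal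
  | .untl A _ φ ψ => A.Nonempty ∧ φ.goodCoal ∧ ψ.goodCoal
  | .rls A _ φ ψ => A.Nonempty ∧ φ.goodCoal ∧ ψ.goodCoal

namespace RBCGS

variable {Agt S Act Res P : Type} [Inhabited S]

/-- Componentwise lifting of the indistinguishability relation to equal-length state
sequences. -/
def ListSim (sim : Agt → S → S → Prop) (a : Agt) (l l' : List S) : Prop :=
  l.length = l'.length ∧ ∀ i < l.length, sim a (l.getD i default) (l'.getD i default)

/-- A strategy for coalition A is uniform: indistinguishable histories get the same
action for each agent of A. -/
def Uniform (A : Set Agt) (sim : Agt → S → S → Prop) (F : List S → Agt → Act) : Prop :=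
  ∀ a ∈ A, ∀ l l' : List S, l ≠ [] → l' ≠ [] → ListSim sim a l l' → F l a = F l' a

/-- Truth of an RB±ATL# formula under imperfect information and perfect recall with
strongly uniform strategies (`⊨_iR`). -/
def SatIR (M : RBCGS Agt S Act Res) (V : P → S → Prop) (sim : Agt → S → S → Prop) :
    RBForm Agt Res P → S → Prop
  | .prop p, s => V p s
  | .neg φ, s => ¬ SatIR M V sim φ s
  | .or φ ψ, s => SatIR M V sim φ s ∨ SatIR M V sim ψ s
  | .nxt A b φ, s => ∃ F, M.Strategy A F ∧ Uniform A sim F ∧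
      ∀ s' : S, (∃ a ∈ A, sim a s' s) →
        ∀ l ∈ M.outSet A F b s', 2 ≤ l.length ∧ SatIR M V sim φ (l.getD 1 default)
  | .untl A b φ ψ, s => ∃ F, M.Strategy A F ∧ Uniform A sim F ∧
      ∀ s' : S, (∃ a ∈ A, sim a s' s) →
        ∀ l ∈ M.outSet A F b s', ∃ i < l.length,
          SatIR M V sim ψ (l.getD i default) ∧ ∀ j < i, SatIR M V sim φ (l.getD j default)
  | .rls A b φ ψ, s => ∃ F, M.Strategy A F ∧ Uniform A sim F ∧
      ∀ s' : S, (∃ a ∈ A, sim a s' s) →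
        ∀ l ∈ M.outSet A F b s',
          (∃ i < l.length, SatIR M V sim φ (l.getD i default) ∧
            ∀ j ≤ i, SatIR M V sim ψ (l.getD j default)) ∨
          (∀ j < l.length, SatIR M V sim ψ (l.getD j default))

end RBCGS

namespace RBCGS

variable {Agt S Act Res : Type}

lemma one_le_consR_res1 (M : RBCGS Agt S Act Res) {s : S} {a : Agt} {α : Act}
    (h : α ∈ M.d s a) : 1 ≤ M.consR s α M.res1 := by
  have := M.cost_first s a α h
  unfold consR
  omega

lemma prodR_res1 (M : RBCGS Agt S Act Res) {s : S} {a : Agt} {α : Act}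
    (h : α ∈ M.d s a) : M.prodR s α M.res1 = 0 := by
  have := M.cost_first s a α h
  unfold prodR
  omega

variable [Inhabited S]

lemma Strategy.mem_d {M : RBCGS Agt S Act Res} {A : Set Agt} {F : List S → Agt → Act}
    (hF : M.Strategy A F) {a : Agt} (ha : a ∈ A) {l : List S} {i : ℕ} (hi : i < l.length) :
    F (l.take (i + 1)) a ∈ M.d (l.getD i default) a := by
  have hne : l.take (i + 1) ≠ [] := by
    intro h
    have := congrArg List.length h
    simp at this
    simp [this] at hi
  have hlen : (l.take (i + 1)).length - 1 = i := by
    rw [List.length_take]; omega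
  have h := hF _ hne a ha
  rw [hlen] at h
  simpa [List.getD_eq_getElem?_getD, List.getElem?_take] using h

/-- Each step costs at least one unit of the diminishing resource. -/
lemma eAvail_res1_le {M : RBCGS Agt S Act Res} {A : Set Agt} {F : List S → Agt → Act}
    (hF : M.Strategy A F) (b : Agt → Res → ℕ) {a : Agt} (ha : a ∈ A) (l : List S) (i : ℕ)
    (hi : i ≤ l.length) : M.eAvail F b l i a M.res1 ≤ (b a M.res1 : ℤ) - i := by
  induction i with
  | zero => simp [eAvail]
  | succ i ih =>
    have hmem := hF.mem_d ha (l := l) (i := i) (by omega)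
    have h1 := M.one_le_consR_res1 hmem
    have h2 := M.prodR_res1 hmem
    have h3 := ih (by omega)
    simp only [eAvail]
    omega

/-- The strategy is consulted along a `b`-consistent computation only on histories of length at
most `k = min_{a ∈ A} b_{a,1}`. -/
lemma take_le_sInf {M : RBCGS Agt S Act Res} {A : Set Agt} (hA : A.Nonempty)
    {F : List S → Agt → Act} (hF : M.Strategy A F) {b : Agt → Res → ℕ} {l : List S}
    (hl : M.BConsistent A F b l) {i : ℕ} (hi : i + 1 < l.length) :
    i + 1 ≤ sInf ((fun a => b a M.res1) '' A) := by
  refine le_csInf (hA.image _) ?_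
  rintro _ ⟨a, ha, rfl⟩
  have h1 := M.one_le_consR_res1 (hF.mem_d ha (l := l) (i := i) (by omega))
  have h2 := hl a ha i hi M.res1
  have h3 := eAvail_res1_le hF b ha l i (by omega)
  simp only
  omega

lemma eAvail_congr (M : RBCGS Agt S Act Res) {F F' : List S → Agt → Act}
    (b : Agt → Res → ℕ) (l : List S) (i : ℕ)
    (h : ∀ j < i, F (l.take (j + 1)) = F' (l.take (j + 1))) :
    M.eAvail F b l i = M.eAvail F' b l i := by
  induction i with
  | zero => rfl
  | succ i ih =>
    simp only [eAvail]
    rw [ih fun j hj => h j (by omega), h i (by omega)]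

/-- Only `F` has to be a strategy: the resource bound along `l` is read off from `F`, and `F'` then
takes the same values on all proper prefixes of `l`. -/
lemma consistent_and_bConsistent_imp {M : RBCGS Agt S Act Res} {A : Set Agt} (hA : A.Nonempty)
    {F F' : List S → Agt → Act} (hF : M.Strategy A F) {b : Agt → Res → ℕ}
    (hagree : ∀ l : List S, l ≠ [] →
      l.length ≤ sInf ((fun a => b a M.res1) '' A) → F l = F' l)
    {s : S} {l : List S} (h : M.ConsistentFrom A F s l ∧ M.BConsistent A F b l) :
    M.ConsistentFrom A F' s l ∧ M.BConsistent A F' b l := by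
  obtain ⟨⟨hne, h0, hstep⟩, hb⟩ := h
  have key : ∀ i, i + 1 < l.length → F (l.take (i + 1)) = F' (l.take (i + 1)) := by
    intro i hi
    refine hagree _ ?_ ?_
    · simpa using hne
    · exact (List.length_take_le _ _).trans (take_le_sInf hA hF hb hi)
  refine ⟨⟨hne, h0, fun i hi => ?_⟩, fun a ha i hi ρ => ?_⟩
  · rw [← key i hi]
    exact hstep i hi
  · rw [← key i hi, ← M.eAvail_congr b l i fun j hj => key j (by omega)]
    exact hb a ha i hi ρ

end RBCGS

/-- Bounded witnesses for strongly uniform Until strategies: uniform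
strategies agreeing on all nonempty sequences of length at most `k = min_{a∈A} b_{a,1}`
have the same b-maximal outcome sets from every state, and hence one witnesses the
strongly uniform Until condition iff the other does. -/
theorem until_iR_bounded_witness {Agt S Act Res P : Type} [Inhabited S]
    (M : RBCGS Agt S Act Res) (V : P → S → Prop)
    (sim : Agt → S → S → Prop) (hsim : ∀ a, Equivalence (sim a))
    (hsimd : ∀ a s s', sim a s s' → M.d s a = M.d s' a)
    (A : Set Agt) (hA : A.Nonempty) (b : Agt → Res → ℕ)
    (F F' : List S → Agt → Act)
    (hF : M.Strategy A F) (hF' : M.Strategy A F')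
    (hFu : RBCGS.Uniform A sim F) (hF'u : RBCGS.Uniform A sim F')
    (hagree : ∀ l : List S, l ≠ [] →
      l.length ≤ sInf ((fun a => b a M.res1) '' A) → F l = F' l)
    (s : S) (φ ψ : RBForm Agt Res P) :
    (∀ s' : S, M.outSet A F b s' = M.outSet A F' b s') ∧
      ((∀ s' : S, (∃ a ∈ A, sim a s' s) →
          ∀ l ∈ M.outSet A F b s', ∃ i < l.length,
            M.SatIR V sim ψ (l.getD i default) ∧
              ∀ j < i, M.SatIR V sim φ (l.getD j default)) ↔
        (∀ s' : S, (∃ a ∈ A, sim a s' s) →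
          ∀ l ∈ M.outSet A F' b s', ∃ i < l.length,
            M.SatIR V sim ψ (l.getD i default) ∧
              ∀ j < i, M.SatIR V sim φ (l.getD j default))) := by
  have hiff : ∀ (t : S) (l : List S),
      (M.ConsistentFrom A F t l ∧ M.BConsistent A F b l) ↔
        (M.ConsistentFrom A F' t l ∧ M.BConsistent A F' b l) := fun t l =>
    ⟨RBCGS.consistent_and_bConsistent_imp hA hF hagree,
      RBCGS.consistent_and_bConsistent_imp hA hF' fun l h1 h2 => (hagree l h1 h2).symm⟩
  have hout : ∀ s' : S, M.outSet A F b s' = M.outSet A F' b s' := by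
    intro t
    ext l
    simp only [RBCGS.outSet, RBCGS.BMaximal, Set.mem_ofPred_eq, ← and_assoc, hiff]
  exact ⟨hout, by simp only [hout]⟩
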